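/- arXiv:1602.03112 — 4 statements merged into one kernel-verified Lean document; each statement's English description precedes it below -/
import Mathlib

section
/- Let f : ℝ → ℝ be continuously differentiable with f(0) = 0 and f'(0) = 0, let q > 2, and suppose there exist constants C₀ > 0 and T > 0 such that |f'(t)| ≤ C₀|t|^{q-2} for all t with |t| ≥ T. Let F(t) = ∫₀ᵗ f(s) ds. Then for every ε > 0 there exists a constant C_ε > 0 such that (1/2) f(t) t − F(t) ≤ ε t² + C_ε|t|^q for all t ∈ ℝ. -/
/-!
The remainder `G t = (t / 2) • f t - F t` is controlled separately at the two ends of the scale.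
At `0`, `f t = o(t)` because `f 0 = f' 0 = 0`, and integrating gives `F t = o(t ^ 2)`, so
`G t = o(t ^ 2)`. At infinity, integrating the growth bound on `f'` twice gives
`f t = O(|t| ^ (q - 1))` and `F t = O(|t| ^ q)`, so `G t = O(|t| ^ q)`. On the remaining compact
set, away from `0`, `G` is bounded and `|t| ^ q` is bounded below, so a large multiple of
`|t| ^ q` dominates there too.
-/

open Asymptotics Filter Set Topology

section Interpolation

variable {X E F G : Type*} [TopologicalSpace X] [SeminormedAddCommGroup E]
  [SeminormedAddCommGroup F] [NormedAddCommGroup G]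

theorem isBigO_principal_of_continuousOn_of_ne_zero {f : X → E} {h : X → G} {K : Set X}
    (hK : IsCompact K) (hf : ContinuousOn f K) (hh : ContinuousOn h K) (hh0 : ∀ x ∈ K, h x ≠ 0) :
    f =O[𝓟 K] h :=
  (hf.isBigO_principal hK (c := (1 : ℝ)) (by simp)).trans (hh.isBigO_rev_principal hK hh0 1)

theorem exists_norm_le_add_of_isLittleO_nhds_of_isBigO_cocompact {f : X → E} {g : X → F}
    {h : X → G} {a : X} (hf : ContinuousOn f {a}ᶜ) (hh : ContinuousOn h {a}ᶜ)
    (hh0 : ∀ x ≠ a, h x ≠ 0) (hfg : f =o[𝓝 a] g) (hfh : f =O[cocompact X] h)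
    {ε : ℝ} (hε : 0 < ε) :
    ∃ C > 0, ∀ x, ‖f x‖ ≤ ε * ‖g x‖ + C * ‖h x‖ := by
  obtain ⟨U, hU, hUo, haU⟩ := eventually_nhds_iff.1 (hfg.def hε)
  obtain ⟨B, hB⟩ := hfh.bound
  obtain ⟨K, hK, hKB⟩ := mem_cocompact.1 hB
  have hKU : K \ U ⊆ {a}ᶜ := fun x hx hxa ↦ hx.2 (hxa ▸ haU)
  have middle : f =O[𝓟 (K \ U)] h :=
    isBigO_principal_of_continuousOn_of_ne_zero (hK.diff hUo) (hf.mono hKU) (hh.mono hKU)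
      fun x hx ↦ hh0 x (hKU hx)
  have outer : f =O[𝓟 Kᶜ] h := isBigO_principal.2 ⟨B, hKB⟩
  obtain ⟨C, hC, hfC⟩ := (middle.sup outer).exists_pos
  rw [sup_principal, isBigOWith_principal] at hfC
  refine ⟨C, hC, fun x ↦ ?_⟩
  by_cases hxU : x ∈ U
  · exact (hU x hxU).trans (le_add_of_nonneg_right (by positivity))
  · have hx : x ∈ K \ U ∪ Kᶜ := by
      by_cases hxK : x ∈ K
      exacts [.inl ⟨hxK, hxU⟩, .inr hxK]
    exact (hfC x hx).trans (le_add_of_nonneg_left (by positivity))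

end Interpolation

section Primitive

variable {E : Type*} [NormedAddCommGroup E] [NormedSpace ℝ E] {f f' : ℝ → E}

theorem norm_le_add_rpow_of_norm_deriv_le_rpow {r C T t : ℝ} (hr : 0 < r) (hC : 0 ≤ C)
    (hT : 0 < T) (hTt : T ≤ t) (hf : ∀ s ∈ Icc T t, HasDerivAt f (f' s) s)
    (hf' : ∀ s ∈ Icc T t, ‖f' s‖ ≤ C * s ^ (r - 1)) :
    ‖f t‖ ≤ ‖f T‖ + C / r * t ^ r := by
  have hB : ∀ s ∈ Icc T t,
      HasDerivAt (fun s ↦ ‖f T‖ + C / r * s ^ r) (C * s ^ (r - 1)) s := fun s hs ↦ by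
    have := ((Real.hasDerivAt_rpow_const (p := r) (.inl (hT.trans_le hs.1).ne')).const_mul
      (C / r)).const_add ‖f T‖
    rwa [← mul_assoc, div_mul_cancel₀ C hr.ne'] at this
  exact image_norm_le_of_norm_deriv_right_le_deriv_boundary' (B := fun s ↦ ‖f T‖ + C / r * s ^ r)
    (fun s hs ↦ (hf s hs).continuousAt.continuousWithinAt)
    (fun s hs ↦ (hf s (Ico_subset_Icc_self hs)).hasDerivWithinAt)
    (le_add_of_nonneg_right (by positivity))
    (fun s hs ↦ (hB s hs).continuousAt.continuousWithinAt)
    (fun s hs ↦ (hB s (Ico_subset_Icc_self hs)).hasDerivWithinAt)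
    (fun s hs ↦ hf' s (Ico_subset_Icc_self hs)) (right_mem_Icc.2 hTt)

theorem isBigO_atTop_rpow_of_hasDerivAt {r : ℝ} (hr : 0 < r)
    (hf : ∀ᶠ t in atTop, HasDerivAt f (f' t) t) (hf' : f' =O[atTop] fun t ↦ t ^ (r - 1)) :
    f =O[atTop] fun t ↦ t ^ r := by
  obtain ⟨C, hC, hfC⟩ := hf'.exists_nonneg
  obtain ⟨T, hT⟩ := ((eventually_gt_atTop 0).and (hf.and hfC.bound)).exists_forall_of_atTop
  have hT0 : 0 < T := (hT T le_rfl).1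
  have hbound : f =O[atTop] fun t ↦ ‖f T‖ + C / r * t ^ r := by
    refine .of_norm_eventuallyLE ?_
    filter_upwards [eventually_ge_atTop T] with t ht
    refine norm_le_add_rpow_of_norm_deriv_le_rpow hr hC hT0 ht (fun s hs ↦ (hT s hs.1).2.1)
      fun s hs ↦ ?_
    simpa only [Real.norm_of_nonneg (Real.rpow_nonneg (hT s hs.1).1.le _)] using (hT s hs.1).2.2
  have hconst : (fun _ ↦ ‖f T‖) =O[atTop] fun t : ℝ ↦ t ^ r :=
    (isLittleO_const_left.2
      (.inr (tendsto_norm_atTop_atTop.comp (tendsto_rpow_atTop hr)))).isBigO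
  exact hbound.trans (hconst.add (isBigO_const_mul_self _ _ _))

theorem isBigO_cocompact_abs_rpow_of_hasDerivAt {r : ℝ} (hr : 0 < r)
    (hf : ∀ᶠ t in cocompact ℝ, HasDerivAt f (f' t) t)
    (hf' : f' =O[cocompact ℝ] fun t ↦ |t| ^ (r - 1)) :
    f =O[cocompact ℝ] fun t ↦ |t| ^ r := by
  have abs_rpow_atTop (p : ℝ) : (fun t : ℝ ↦ |t| ^ p) =ᶠ[atTop] fun t ↦ t ^ p := by
    filter_upwards [eventually_ge_atTop 0] with t ht
    rw [abs_of_nonneg ht]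
  rw [cocompact_eq_atBot_atTop] at hf hf' ⊢
  rw [eventually_sup] at hf
  rw [isBigO_sup] at hf' ⊢
  constructor
  · have hneg : (fun t ↦ f (-t)) =O[atTop] fun t ↦ t ^ r := by
      refine isBigO_atTop_rpow_of_hasDerivAt (f' := fun t ↦ -f' (-t)) hr ?_ ?_
      · filter_upwards [tendsto_neg_atTop_atBot.eventually hf.1] with t ht
        simpa using HasDerivAt.comp_const_sub 0 t (by simpa using ht)
      · refine ((hf'.1.comp_tendsto tendsto_neg_atTop_atBot).neg_left).trans_eventuallyEq ?_
        simpa [Function.comp_def] using abs_rpow_atTop (r - 1)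
    simpa [Function.comp_def] using
      (hneg.trans_eventuallyEq (abs_rpow_atTop r).symm).comp_tendsto tendsto_neg_atBot_atTop
  · exact (isBigO_atTop_rpow_of_hasDerivAt hr hf.2
      (hf'.2.trans_eventuallyEq (abs_rpow_atTop _))).trans_eventuallyEq (abs_rpow_atTop r).symm

end Primitive

section Remainder

variable {E : Type*} [NormedAddCommGroup E] [NormedSpace ℝ E] {f f' F : ℝ → E}

theorem isLittleO_half_smul_sub_primitive_nhds_zero (hF : ∀ t, HasDerivAt F (f t) t)
    (hF0 : F 0 = 0) (hf0 : f 0 = 0) (hf : HasDerivAt f 0 0) :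
    (fun t ↦ (t / 2) • f t - F t) =o[𝓝 0] fun t ↦ t ^ 2 := by
  have hf_id : f =o[𝓝 0] fun t ↦ t := by
    simpa [hf0] using hasDerivAt_iff_isLittleO_nhds_zero.1 hf
  have hF_sq : F =o[𝓝 0] fun t ↦ t ^ 2 := by
    simpa [hF0] using convex_univ.isLittleO_pow_succ_real (n := 1) (mem_univ (0 : ℝ))
      (fun t _ ↦ (hF t).hasDerivWithinAt) (by simpa using hf_id)
  have hhalf : (fun t : ℝ ↦ t / 2) =O[𝓝 0] fun t ↦ t := by
    simpa only [div_eq_inv_mul] using isBigO_const_mul_self (2⁻¹ : ℝ) (fun t ↦ t) (𝓝 0)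
  exact ((hhalf.smul_isLittleO hf_id).congr_right fun t ↦ by rw [smul_eq_mul, sq]).sub hF_sq

theorem isBigO_half_smul_sub_primitive_cocompact {q : ℝ} (hq : 1 < q)
    (hF : ∀ᶠ t in cocompact ℝ, HasDerivAt F (f t) t)
    (hf : ∀ᶠ t in cocompact ℝ, HasDerivAt f (f' t) t)
    (hf' : f' =O[cocompact ℝ] fun t ↦ |t| ^ (q - 2)) :
    (fun t ↦ (t / 2) • f t - F t) =O[cocompact ℝ] fun t ↦ |t| ^ q := by
  have hf_rpow : f =O[cocompact ℝ] fun t ↦ |t| ^ (q - 1) :=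
    isBigO_cocompact_abs_rpow_of_hasDerivAt (sub_pos.2 hq) hf (by convert hf' using 3; ring)
  have hF_rpow : F =O[cocompact ℝ] fun t ↦ |t| ^ q :=
    isBigO_cocompact_abs_rpow_of_hasDerivAt (zero_lt_one.trans hq) hF hf_rpow
  have hhalf : (fun t : ℝ ↦ t / 2) =O[cocompact ℝ] fun t ↦ |t| := by
    simpa only [div_eq_inv_mul] using
      (isBigO_const_mul_self (2⁻¹ : ℝ) (fun t ↦ t) (cocompact ℝ)).abs_right
  refine ((hhalf.smul hf_rpow).congr_right fun t ↦ ?_).sub hF_rpow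
  rw [smul_eq_mul, ← Real.rpow_one_add' (abs_nonneg t) (by linarith), add_sub_cancel]

theorem stmt_3_general {q : ℝ} (hq : 1 < q) (hF : ∀ t, HasDerivAt F (f t) t) (hF0 : F 0 = 0)
    (hf : ∀ t, HasDerivAt f (f' t) t) (hf0 : f 0 = 0) (hf'0 : f' 0 = 0)
    (hf' : f' =O[cocompact ℝ] fun t ↦ |t| ^ (q - 2)) {ε : ℝ} (hε : 0 < ε) :
    ∃ C > 0, ∀ t, ‖(t / 2) • f t - F t‖ ≤ ε * t ^ 2 + C * |t| ^ q := by
  have hf_cont : Continuous f := continuous_iff_continuousAt.2 fun t ↦ (hf t).continuousAt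
  have hF_cont : Continuous F := continuous_iff_continuousAt.2 fun t ↦ (hF t).continuousAt
  have hG_cont : Continuous fun t ↦ (t / 2) • f t - F t := by fun_prop
  have hpow_cont : Continuous fun t : ℝ ↦ |t| ^ q :=
    continuous_abs.rpow_const fun _ ↦ .inr (by linarith)
  have hpow_ne_zero (t : ℝ) (ht : t ≠ 0) : |t| ^ q ≠ 0 :=
    (Real.rpow_pos_of_pos (abs_pos.2 ht) q).ne'
  obtain ⟨C, hC, hG⟩ := exists_norm_le_add_of_isLittleO_nhds_of_isBigO_cocompact
    hG_cont.continuousOn hpow_cont.continuousOn hpow_ne_zero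
    (isLittleO_half_smul_sub_primitive_nhds_zero hF hF0 hf0 (hf'0 ▸ hf 0))
    (isBigO_half_smul_sub_primitive_cocompact hq (.of_forall hF) (.of_forall hf) hf') hε
  refine ⟨C, hC, fun t ↦ (hG t).trans_eq ?_⟩
  rw [Real.norm_of_nonneg (sq_nonneg t), Real.norm_of_nonneg (by positivity)]

end Remainder

theorem stmt_3 (f : ℝ → ℝ) (hf : ContDiff ℝ 1 f) (hf0 : f 0 = 0) (hf'0 : deriv f 0 = 0)
    (q : ℝ) (hq : 2 < q) (C₀ T : ℝ) (hC₀ : 0 < C₀) (hT : 0 < T)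
    (hgrowth : ∀ t : ℝ, T ≤ |t| → |deriv f t| ≤ C₀ * |t| ^ (q - 2))
    (F : ℝ → ℝ) (hF : ∀ t : ℝ, F t = ∫ s in (0:ℝ)..t, f s) :
    ∀ ε : ℝ, 0 < ε → ∃ Cε : ℝ, 0 < Cε ∧
      ∀ t : ℝ, (1/2) * f t * t - F t ≤ ε * t ^ 2 + Cε * |t| ^ q := by
  intro ε hε
  have hF_deriv (t : ℝ) : HasDerivAt F (f t) t :=
    funext hF ▸ (hf.continuous.integral_hasStrictDerivAt 0 t).hasDerivAt
  have hf_deriv (t : ℝ) : HasDerivAt f (deriv f t) t :=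
    (hf.differentiable one_ne_zero t).hasDerivAt
  have hf'_isBigO : deriv f =O[cocompact ℝ] fun t ↦ |t| ^ (q - 2) := by
    refine .of_bound C₀ ?_
    filter_upwards [tendsto_norm_cocompact_atTop.eventually_ge_atTop T] with t ht
    simpa only [Real.norm_eq_abs, Real.abs_rpow_of_nonneg (abs_nonneg t), abs_abs]
      using hgrowth t ht
  obtain ⟨C, hC, hG⟩ := stmt_3_general (one_lt_two.trans hq) hF_deriv (by simp [hF]) hf_deriv
    hf0 hf'0 hf'_isBigO hε
  refine ⟨C, hC, fun t ↦ ?_⟩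
  calc (1 / 2) * f t * t - F t = (t / 2) • f t - F t := by rw [smul_eq_mul]; ring
    _ ≤ ε * t ^ 2 + C * |t| ^ q := (le_abs_self _).trans (hG t)
end

section
/- Let f : ℝ → ℝ be continuously differentiable with f(0) = 0 and f'(0) = 0, let q > 2, and suppose there exist constants C₀ > 0 and T > 0 such that |f'(t)| ≤ C₀|t|^{q-2} for all t with |t| ≥ T. Let F(t) = ∫₀ᵗ f(s) ds. Then for every ε > 0 there exists a constant C_ε > 0 such that for all a, b ∈ ℝ, |F(a + b) − F(a)| ≤ ε (|a| + |b|)|b| + C_ε (|a| + |b|)^{q-1} |b|. -/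
/-!
Near `0` the derivative `f'` is smaller than `ε`, and away from `0` it is at most a multiple of
`|t| ^ (q - 2)`, by compactness on an annulus and by the growth condition outside it. So
`|f' t| ≤ ε + C |t| ^ (q - 2)` everywhere. A bound on a derivative by a monotone function of `|t|`
passes to increments by the mean value inequality; applying this first to `f` on `[0, t]`, then to
`F` on `[a, a + b]`, gives the claim.
-/

open Set Metric

theorem exists_norm_le_const_add_mul_rpow {X E : Type*} [SeminormedAddCommGroup X] [ProperSpace X]
    [SeminormedAddCommGroup E] {g : X → E} (hg : Continuous g) (hg0 : g 0 = 0) {p C₀ T : ℝ}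
    (hgrowth : ∀ x, T ≤ ‖x‖ → ‖g x‖ ≤ C₀ * ‖x‖ ^ p) {ε : ℝ} (hε : 0 < ε) :
    ∃ C : ℝ, 0 < C ∧ ∀ x, ‖g x‖ ≤ ε + C * ‖x‖ ^ p := by
  obtain ⟨δ, hδ, hsmall⟩ : ∃ δ > 0, ∀ x, ‖x‖ < δ → ‖g x‖ < ε := by
    simpa [hg0] using Metric.continuousAt_iff.1 (hg.continuousAt (x := 0)) ε hε
  have hannulus : IsCompact (closedBall (0 : X) T \ ball 0 δ) :=
    (isCompact_closedBall 0 T).diff isOpen_ball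
  have hcont : ContinuousOn (fun x ↦ ‖g x‖ / ‖x‖ ^ p) (closedBall (0 : X) T \ ball 0 δ) := by
    intro x hx
    have hx0 : 0 < ‖x‖ := hδ.trans_le (by simpa using hx.2)
    exact (hg.norm.continuousAt.div (continuous_norm.continuousAt.rpow_const (.inl hx0.ne'))
      (Real.rpow_pos_of_pos hx0 p).ne').continuousWithinAt
  obtain ⟨M, hM⟩ := hannulus.bddAbove_image hcont
  have hC : 0 < max 1 (max C₀ M) := zero_lt_one.trans_le (le_max_left _ _)
  refine ⟨max 1 (max C₀ M), hC, fun x ↦ ?_⟩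
  rcases lt_or_ge ‖x‖ δ with hxδ | hxδ
  · exact (hsmall x hxδ).le.trans (le_add_of_nonneg_right (by positivity))
  refine le_add_of_nonneg_of_le hε.le ?_
  rcases le_or_gt T ‖x‖ with hxT | hxT
  · exact (hgrowth x hxT).trans (by gcongr; simp)
  · have hx0 : 0 < ‖x‖ := hδ.trans_le hxδ
    have hxM : ‖g x‖ / ‖x‖ ^ p ≤ M :=
      hM (mem_image_of_mem _ ⟨by simpa using hxT.le, by simpa using hxδ⟩)
    exact ((div_le_iff₀ (by positivity)).1 hxM).trans (by gcongr; simp)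

section MeanValue

variable {𝕜 E : Type*} [RCLike 𝕜] [NormedAddCommGroup E] [NormedSpace 𝕜 E]

theorem norm_image_add_sub_le_of_norm_deriv_le_monotoneOn {f f' : 𝕜 → E} {φ : ℝ → ℝ}
    (hf : ∀ x, HasDerivAt f (f' x) x) (hφ : MonotoneOn φ (Ici 0))
    (hbound : ∀ x, ‖f' x‖ ≤ φ ‖x‖) (a b : 𝕜) :
    ‖f (a + b) - f a‖ ≤ φ (‖a‖ + ‖b‖) * ‖b‖ := by
  have hball : ∀ x ∈ closedBall (0 : 𝕜) (‖a‖ + ‖b‖), ‖f' x‖ ≤ φ (‖a‖ + ‖b‖) := fun x hx ↦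
    (hbound x).trans <| hφ (norm_nonneg x) (by simp only [mem_Ici]; positivity) (by simpa using hx)
  have ha : a ∈ closedBall (0 : 𝕜) (‖a‖ + ‖b‖) := by simp
  have hab : a + b ∈ closedBall (0 : 𝕜) (‖a‖ + ‖b‖) := by simpa using norm_add_le a b
  simpa only [add_sub_cancel_left] using
    (convex_closedBall 0 (‖a‖ + ‖b‖)).norm_image_sub_le_of_norm_hasDerivWithin_le
      (fun x _ ↦ (hf x).hasDerivWithinAt) hball ha hab

theorem norm_image_add_sub_le_of_norm_deriv_deriv_le_monotoneOn {F f f' : 𝕜 → E} {φ : ℝ → ℝ}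
    (hF : ∀ x, HasDerivAt F (f x) x) (hf : ∀ x, HasDerivAt f (f' x) x) (hf0 : f 0 = 0)
    (hφ : MonotoneOn φ (Ici 0)) (hbound : ∀ x, ‖f' x‖ ≤ φ ‖x‖) (a b : 𝕜) :
    ‖F (a + b) - F a‖ ≤ φ (‖a‖ + ‖b‖) * (‖a‖ + ‖b‖) * ‖b‖ := by
  have hφ_nonneg : ∀ t ∈ Ici (0 : ℝ), 0 ≤ φ t := fun t ht ↦
    (norm_nonneg (f' 0)).trans <| (hbound 0).trans <| hφ (norm_nonneg _) ht (by simpa using ht)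
  have hf_bound : ∀ x, ‖f x‖ ≤ φ ‖x‖ * ‖x‖ := fun x ↦ by
    simpa [hf0] using norm_image_add_sub_le_of_norm_deriv_le_monotoneOn hf hφ hbound 0 x
  exact norm_image_add_sub_le_of_norm_deriv_le_monotoneOn (φ := fun t ↦ φ t * t) hF
    (hφ.mul monotoneOn_id hφ_nonneg fun _ ht ↦ ht) hf_bound a b

theorem stmt_4_general {F f f' : 𝕜 → E} (hF : ∀ t, HasDerivAt F (f t) t)
    (hf : ∀ t, HasDerivAt f (f' t) t) (hf' : Continuous f') (hf0 : f 0 = 0) (hf'0 : f' 0 = 0)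
    {q : ℝ} (hq : 2 ≤ q) {C₀ T : ℝ} (hgrowth : ∀ t, T ≤ ‖t‖ → ‖f' t‖ ≤ C₀ * ‖t‖ ^ (q - 2))
    {ε : ℝ} (hε : 0 < ε) :
    ∃ Cε : ℝ, 0 < Cε ∧ ∀ a b : 𝕜, ‖F (a + b) - F a‖ ≤
      ε * (‖a‖ + ‖b‖) * ‖b‖ + Cε * (‖a‖ + ‖b‖) ^ (q - 1) * ‖b‖ := by
  obtain ⟨C, hC, hbound⟩ := exists_norm_le_const_add_mul_rpow hf' hf'0 hgrowth hε
  refine ⟨C, hC, fun a b ↦ ?_⟩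
  have hmono : MonotoneOn (fun t : ℝ ↦ ε + C * t ^ (q - 2)) (Ici 0) :=
    fun s hs t _ hst ↦ add_le_add_right
      (mul_le_mul_of_nonneg_left (Real.rpow_le_rpow hs hst (sub_nonneg.2 hq)) hC.le) ε
  have hpow : (‖a‖ + ‖b‖) ^ (q - 1) = (‖a‖ + ‖b‖) ^ (q - 2) * (‖a‖ + ‖b‖) := by
    rw [← Real.rpow_add_one' (by positivity) (by linarith)]
    ring_nf
  calc ‖F (a + b) - F a‖
      ≤ (ε + C * (‖a‖ + ‖b‖) ^ (q - 2)) * (‖a‖ + ‖b‖) * ‖b‖ :=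
        norm_image_add_sub_le_of_norm_deriv_deriv_le_monotoneOn hF hf hf0 hmono hbound a b
    _ = ε * (‖a‖ + ‖b‖) * ‖b‖ + C * (‖a‖ + ‖b‖) ^ (q - 1) * ‖b‖ := by rw [hpow]; ring

end MeanValue

theorem stmt_4 (f : ℝ → ℝ) (hf : ContDiff ℝ 1 f) (hf0 : f 0 = 0) (hf'0 : deriv f 0 = 0)
    (q : ℝ) (hq : 2 < q) (C₀ T : ℝ) (hC₀ : 0 < C₀) (hT : 0 < T)
    (hgrowth : ∀ t : ℝ, T ≤ |t| → |deriv f t| ≤ C₀ * |t| ^ (q - 2))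
    (F : ℝ → ℝ) (hF : ∀ t : ℝ, F t = ∫ s in (0:ℝ)..t, f s) :
    ∀ ε : ℝ, 0 < ε → ∃ Cε : ℝ, 0 < Cε ∧
      ∀ a b : ℝ, |F (a + b) - F a| ≤
        ε * (|a| + |b|) * |b| + Cε * (|a| + |b|) ^ (q - 1) * |b| := by
  obtain rfl : F = fun t ↦ ∫ s in (0:ℝ)..t, f s := funext hF
  exact fun ε hε ↦ stmt_4_general (fun t ↦ (hf.continuous.integral_hasStrictDerivAt 0 t).hasDerivAt)
    (fun t ↦ (hf.differentiable one_ne_zero t).hasDerivAt) (hf.continuous_deriv le_rfl)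
    hf0 hf'0 hq.le hgrowth hε
end

section
/- Let f : ℝ → ℝ be continuous, F(t) = ∫₀ᵗ f(s) ds, and θ > 2 a real number such that 0 < θ F(t) ≤ t f(t) for all t ≠ 0 (Ambrosetti–Rabinowitz condition). Then m := min(F(1), F(−1)) > 0 and F(t) ≥ m |t|^θ for all t with |t| ≥ 1. -/
/-!
For `t > 0` the derivative of `F t * t ^ (-θ)` is `t ^ (-θ - 1) * (t * f t - θ * F t)`, so the
Ambrosetti–Rabinowitz inequality says exactly that `F t * t ^ (-θ)` is nondecreasing. Negative
arguments reduce to positive ones because `t ↦ F (-t)` satisfies the same inequality.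
-/

open Set

section PowerGrowth

variable {F f : ℝ → ℝ} {θ a t : ℝ}

theorem hasDerivAt_mul_rpow_neg {F' : ℝ} (ht : 0 < t) (hF : HasDerivAt F F' t) :
    HasDerivAt (fun x => F x * x ^ (-θ)) (t ^ (-θ - 1) * (t * F' - θ * F t)) t := by
  have rpow_split : t ^ (-θ) = t ^ (-θ - 1) * t := by
    rw [← Real.rpow_add_one ht.ne', sub_add_cancel]
  refine (hF.mul (Real.hasDerivAt_rpow_const (Or.inl ht.ne'))).congr_deriv ?_
  rw [rpow_split]
  ring

theorem monotoneOn_mul_rpow_neg {s : Set ℝ} (hs : Convex ℝ s) (hs_pos : s ⊆ Ioi 0)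
    (hcont : ContinuousOn F s) (hderiv : ∀ x ∈ interior s, HasDerivAt F (f x) x)
    (hle : ∀ x ∈ interior s, θ * F x ≤ x * f x) :
    MonotoneOn (fun x => F x * x ^ (-θ)) s := by
  have interior_pos : ∀ x ∈ interior s, 0 < x := fun x hx => hs_pos (interior_subset hx)
  refine monotoneOn_of_hasDerivWithinAt_nonneg hs
    (hcont.mul (continuousOn_id.rpow_const fun x hx => Or.inl (hs_pos hx).ne'))
    (fun x hx => (hasDerivAt_mul_rpow_neg (interior_pos x hx) (hderiv x hx)).hasDerivWithinAt)
    fun x hx => ?_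
  exact mul_nonneg (Real.rpow_nonneg (interior_pos x hx).le _) (sub_nonneg.2 (hle x hx))

theorem mul_div_rpow_le_of_le (ha : 0 < a) (hcont : ContinuousOn F (Ici a))
    (hderiv : ∀ x, a < x → HasDerivAt F (f x) x) (hle : ∀ x, a < x → θ * F x ≤ x * f x)
    (hat : a ≤ t) : F a * (t / a) ^ θ ≤ F t := by
  have ht : 0 < t := ha.trans_le hat
  have hmono : MonotoneOn (fun x => F x * x ^ (-θ)) (Ici a) :=
    monotoneOn_mul_rpow_neg (convex_Ici a) (Ici_subset_Ioi.2 ha) hcont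
      (by simpa only [interior_Ici, mem_Ioi] using hderiv)
      (by simpa only [interior_Ici, mem_Ioi] using hle)
  calc F a * (t / a) ^ θ = F a * a ^ (-θ) * t ^ θ := by
        rw [Real.div_rpow ht.le ha.le, Real.rpow_neg ha.le]
        ring
    _ ≤ F t * t ^ (-θ) * t ^ θ :=
        mul_le_mul_of_nonneg_right (hmono self_mem_Ici hat hat) (Real.rpow_nonneg ht.le θ)
    _ = F t := by rw [mul_assoc, ← Real.rpow_add ht, neg_add_cancel, Real.rpow_zero, mul_one]

theorem mul_neg_div_rpow_le_of_le_neg (ha : 0 < a) (hcont : ContinuousOn F (Iic (-a)))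
    (hderiv : ∀ x, x < -a → HasDerivAt F (f x) x) (hle : ∀ x, x < -a → θ * F x ≤ x * f x)
    (hta : t ≤ -a) : F (-a) * (-t / a) ^ θ ≤ F t := by
  have hcont_neg : ContinuousOn (fun x => F (-x)) (Ici a) :=
    hcont.comp continuousOn_neg fun _ hx => mem_Iic.2 (neg_le_neg hx)
  have hderiv_neg (x : ℝ) (hx : a < x) : HasDerivAt (fun y => F (-y)) (-f (-x)) x :=
    ((hderiv (-x) (neg_lt_neg hx)).comp x (hasDerivAt_neg x)).congr_deriv (mul_neg_one _)
  have hle_neg (x : ℝ) (hx : a < x) : θ * F (-x) ≤ x * -f (-x) := by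
    simpa using hle (-x) (neg_lt_neg hx)
  simpa using mul_div_rpow_le_of_le ha hcont_neg hderiv_neg hle_neg (le_neg_of_le_neg hta)

end PowerGrowth

theorem stmt_6_general {F f : ℝ → ℝ} {θ R : ℝ} (hθ : 0 < θ) (hR : 0 < R)
    (hderiv : ∀ t, R ≤ |t| → HasDerivAt F (f t) t)
    (hAR : ∀ t, R ≤ |t| → 0 < θ * F t ∧ θ * F t ≤ t * f t) :
    0 < min (F R) (F (-R)) ∧
      ∀ t, R ≤ |t| → min (F R) (F (-R)) * (|t| / R) ^ θ ≤ F t := by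
  have le_abs_of_ge (x : ℝ) (hx : R ≤ x) : R ≤ |x| := le_abs.2 (Or.inl hx)
  have le_abs_of_le_neg (x : ℝ) (hx : x ≤ -R) : R ≤ |x| := le_abs.2 (Or.inr (le_neg_of_le_neg hx))
  have F_pos (t : ℝ) (ht : R ≤ |t|) : 0 < F t := pos_of_mul_pos_right (hAR t ht).1 hθ.le
  refine ⟨lt_min (F_pos R (le_abs_of_ge R le_rfl)) (F_pos (-R) (le_abs_of_le_neg (-R) le_rfl)),
    fun t ht => ?_⟩
  have ratio_rpow_nonneg : 0 ≤ (|t| / R) ^ θ := by positivity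
  rcases le_abs'.1 ht with ht_neg | ht_pos
  · refine (mul_le_mul_of_nonneg_right (min_le_right _ _) ratio_rpow_nonneg).trans ?_
    rw [abs_of_nonpos (by linarith)]
    exact mul_neg_div_rpow_le_of_le_neg hR
      (fun x hx => (hderiv x (le_abs_of_le_neg x hx)).continuousAt.continuousWithinAt)
      (fun x hx => hderiv x (le_abs_of_le_neg x hx.le))
      (fun x hx => (hAR x (le_abs_of_le_neg x hx.le)).2) ht_neg
  · refine (mul_le_mul_of_nonneg_right (min_le_left _ _) ratio_rpow_nonneg).trans ?_
    rw [abs_of_nonneg (hR.le.trans ht_pos)]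
    exact mul_div_rpow_le_of_le hR
      (fun x hx => (hderiv x (le_abs_of_ge x hx)).continuousAt.continuousWithinAt)
      (fun x hx => hderiv x (le_abs_of_ge x hx.le))
      (fun x hx => (hAR x (le_abs_of_ge x hx.le)).2) ht_pos

theorem stmt_6 (f : ℝ → ℝ) (hf : Continuous f)
    (F : ℝ → ℝ) (hF : ∀ t : ℝ, F t = ∫ s in (0:ℝ)..t, f s)
    (θ : ℝ) (hθ : 2 < θ)
    (hAR : ∀ t : ℝ, t ≠ 0 → 0 < θ * F t ∧ θ * F t ≤ t * f t) :
    0 < min (F 1) (F (-1)) ∧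
      ∀ t : ℝ, 1 ≤ |t| → F t ≥ min (F 1) (F (-1)) * |t| ^ θ := by
  have hderiv (t : ℝ) : HasDerivAt F (f t) t :=
    funext hF ▸ (hf.integral_hasStrictDerivAt 0 t).hasDerivAt
  simpa only [div_one] using stmt_6_general (two_pos.trans hθ) one_pos (fun t _ => hderiv t)
    fun t ht => hAR t (abs_pos.1 (one_pos.trans_le ht))
end

section
/- Let f : ℝ → ℝ be continuous with f(0) = 0, suppose the map t ↦ f(t)/t is nondecreasing on (0, ∞), and set F(t) = ∫₀ᵗ f(s) ds. Then the function H(t) := (1/2) t f(t) − F(t) is nonnegative and nondecreasing on [0, ∞). -/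
/-!
Since `∫₀ᵗ x dx = t² / 2`, the function `H` can be written as
`H t = ∫₀ᵗ (f t / t - f x / x) x dx`. The integrand is nonnegative because `x ↦ f x / x` is
nondecreasing; when `t` grows, both the integrand and the domain of integration grow. The same
argument works with the weight `x ^ p`, `p > -1`, in place of `x`.
-/

open MeasureTheory Set

section WeightedIntegral

variable {μ : Measure ℝ} {g w : ℝ → ℝ} {a t : ℝ}

theorem sub_mul_nonneg_of_monotoneOn (hg : MonotoneOn g (Ioc a t))
    (hw : ∀ x ∈ Ioc a t, 0 ≤ w x) : ∀ x ∈ Ioc a t, 0 ≤ (g t - g x) * w x := fun x hx ↦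
  mul_nonneg (sub_nonneg.2 (hg hx (right_mem_Ioc.2 (hx.1.trans_le hx.2)) hx.2)) (hw x hx)

theorem integral_sub_mul_nonneg_of_monotoneOn (hat : a ≤ t) (hg : MonotoneOn g (Ioc a t))
    (hw : ∀ x ∈ Ioc a t, 0 ≤ w x) : 0 ≤ ∫ x in a..t, (g t - g x) * w x ∂μ := by
  rw [intervalIntegral.integral_of_le hat]
  exact setIntegral_nonneg measurableSet_Ioc (sub_mul_nonneg_of_monotoneOn hg hw)

theorem monotoneOn_integral_sub_mul (hg : MonotoneOn g (Ioi a)) (hw : ∀ x ∈ Ioi a, 0 ≤ w x)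
    (hint : ∀ t ∈ Ici a, IntervalIntegrable (fun x ↦ (g t - g x) * w x) μ a t) :
    MonotoneOn (fun t ↦ ∫ x in a..t, (g t - g x) * w x ∂μ) (Ici a) := by
  intro s hs t ht hst
  have integrand_nonneg (r : ℝ) : ∀ x ∈ Ioc a r, 0 ≤ (g r - g x) * w x :=
    sub_mul_nonneg_of_monotoneOn (hg.mono Ioc_subset_Ioi_self) fun x hx ↦ hw x hx.1
  have integrand_le : ∀ x ∈ Ioc a s, (g s - g x) * w x ≤ (g t - g x) * w x := fun x hx ↦
    have has : a < s := hx.1.trans_le hx.2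
    mul_le_mul_of_nonneg_right (sub_le_sub_right (hg has (has.trans_le hst) hst) _) (hw x hx.1)
  have domain_subset : Ioc a s ⊆ Ioc a t := Ioc_subset_Ioc_right hst
  have hint_t : IntegrableOn (fun x ↦ (g t - g x) * w x) (Ioc a t) μ := (hint t ht).1
  simp only [intervalIntegral.integral_of_le (mem_Ici.1 hs),
    intervalIntegral.integral_of_le (mem_Ici.1 ht)]
  calc ∫ x in Ioc a s, (g s - g x) * w x ∂μ
      ≤ ∫ x in Ioc a s, (g t - g x) * w x ∂μ :=
        setIntegral_mono_on (hint s hs).1 (hint_t.mono_set domain_subset) measurableSet_Ioc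
          integrand_le
    _ ≤ ∫ x in Ioc a t, (g t - g x) * w x ∂μ :=
        setIntegral_mono_set hint_t
          (ae_restrict_of_forall_mem measurableSet_Ioc (integrand_nonneg t))
          domain_subset.eventuallyLE

end WeightedIntegral

section PowerWeight

variable {f : ℝ → ℝ} {p t : ℝ}

theorem const_sub_div_rpow_mul_rpow (c : ℝ) {x : ℝ} (hx : 0 < x) :
    (c - f x / x ^ p) * x ^ p = c * x ^ p - f x := by
  rw [sub_mul, div_mul_cancel₀ _ (Real.rpow_pos_of_pos hx p).ne']

theorem intervalIntegrable_const_sub_div_rpow_mul_rpow (c : ℝ) (hp : -1 < p) (ht : 0 ≤ t)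
    (hf : IntervalIntegrable f volume 0 t) :
    IntervalIntegrable (fun x ↦ (c - f x / x ^ p) * x ^ p) volume 0 t := by
  refine (((intervalIntegral.intervalIntegrable_rpow' hp).const_mul c).sub hf).congr ?_
  intro x hx
  rw [uIoc_of_le ht] at hx
  exact (const_sub_div_rpow_mul_rpow c hx.1).symm

theorem integral_sub_div_rpow_mul_rpow (hp : -1 < p) (ht : 0 ≤ t)
    (hf : IntervalIntegrable f volume 0 t) :
    ∫ x in 0..t, (f t / t ^ p - f x / x ^ p) * x ^ p =
      t * f t / (p + 1) - ∫ x in 0..t, f x := by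
  have hp1 : p + 1 ≠ 0 := by linarith
  have boundary_term : f t / t ^ p * (t ^ (p + 1) / (p + 1)) = t * f t / (p + 1) := by
    rcases ht.eq_or_lt with rfl | ht
    · simp [Real.zero_rpow hp1]
    · have := (Real.rpow_pos_of_pos ht p).ne'
      rw [Real.rpow_add_one ht.ne']
      field_simp
  calc ∫ x in 0..t, (f t / t ^ p - f x / x ^ p) * x ^ p
      = ∫ x in 0..t, (f t / t ^ p * x ^ p - f x) :=
        intervalIntegral.integral_congr_Ioo_of_le ht fun _ hx ↦
          const_sub_div_rpow_mul_rpow _ hx.1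
    _ = f t / t ^ p * (t ^ (p + 1) / (p + 1)) - ∫ x in 0..t, f x := by
        rw [intervalIntegral.integral_sub
            ((intervalIntegral.intervalIntegrable_rpow' hp).const_mul _) hf,
          intervalIntegral.integral_const_mul, integral_rpow (Or.inl hp),
          Real.zero_rpow hp1, sub_zero]
    _ = t * f t / (p + 1) - ∫ x in 0..t, f x := by rw [boundary_term]

end PowerWeight

theorem stmt_7_general {f : ℝ → ℝ} {p : ℝ} (hp : -1 < p)
    (hf : ∀ t ∈ Ici (0 : ℝ), IntervalIntegrable f volume 0 t)
    (hmono : MonotoneOn (fun t ↦ f t / t ^ p) (Ioi 0)) :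
    (∀ t ∈ Ici (0 : ℝ), 0 ≤ t * f t / (p + 1) - ∫ x in 0..t, f x) ∧
      MonotoneOn (fun t ↦ t * f t / (p + 1) - ∫ x in 0..t, f x) (Ici 0) := by
  have weight_nonneg : ∀ x ∈ Ioi (0 : ℝ), 0 ≤ x ^ p := fun x hx ↦ Real.rpow_nonneg (le_of_lt hx) p
  have integral_eq : ∀ t ∈ Ici (0 : ℝ), ∫ x in 0..t, (f t / t ^ p - f x / x ^ p) * x ^ p =
      t * f t / (p + 1) - ∫ x in 0..t, f x := fun t ht ↦
    integral_sub_div_rpow_mul_rpow hp ht (hf t ht)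
  constructor
  · intro t ht
    rw [← integral_eq t ht]
    exact integral_sub_mul_nonneg_of_monotoneOn ht (hmono.mono Ioc_subset_Ioi_self)
      fun x hx ↦ weight_nonneg x hx.1
  · exact (monotoneOn_integral_sub_mul hmono weight_nonneg fun t ht ↦
      intervalIntegrable_const_sub_div_rpow_mul_rpow _ hp ht (hf t ht)).congr integral_eq

theorem stmt_7 (f : ℝ → ℝ) (hf : Continuous f) (hf0 : f 0 = 0)
    (hmono : ∀ s t : ℝ, 0 < s → s ≤ t → f s / s ≤ f t / t)
    (F : ℝ → ℝ) (hF : ∀ t : ℝ, F t = ∫ s in (0:ℝ)..t, f s)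
    (H : ℝ → ℝ) (hH : ∀ t : ℝ, H t = (1/2) * t * f t - F t) :
    (∀ t : ℝ, 0 ≤ t → 0 ≤ H t) ∧
      (∀ s t : ℝ, 0 ≤ s → s ≤ t → H s ≤ H t) := by
  have H_eq (t : ℝ) : H t = t * f t / (1 + 1) - ∫ x in 0..t, f x := by rw [hH, hF]; ring
  obtain ⟨H_nonneg, H_mono⟩ := stmt_7_general (p := 1) (by norm_num)
    (fun t _ ↦ hf.intervalIntegrable 0 t)
    (fun s hs t _ hst ↦ by simpa only [Real.rpow_one] using hmono s t hs hst)
  simp only [H_eq]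
  exact ⟨H_nonneg, fun s t hs hst ↦ H_mono hs (hs.trans hst) hst⟩
end
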